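/- For every Lusztig datum a ∈ ℬ, every 1 ≤ i ≤ n, and every K ∈ M_n^× with i ∉ K and i+1 ∈ K, one has M_K(a) = min{ M_K(ā), M_{s_iK}(ā) + ⟨h_i, wt(ā)⟩ − ε_i^*(a) }, where ā = (ẽ_i^*)^{ε_i^*(a)} a is the ε_i^*(a)-fold application of ẽ_i^* to a (well defined since each application of ẽ_i^* decreases ε_i^* by 1), s_iK = (K ∖ {i+1}) ∪ {i}, and ⟨h_i, wt(ā)⟩ = −2 m_i(ā) + m_{i−1}(ā) + m_{i+1}(ā). -/

import Mathlib

/-- The set of Lusztig data: `a : Π → ℤ_{≥0}`, modeled as an integer-valued function on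
`ℤ × ℤ` that is nonnegative everywhere and vanishes off `Π = {(k,l) : 1 ≤ k < l ≤ n+1}`. -/
def IsLusztig (n : ℕ) (a : ℤ → ℤ → ℤ) : Prop :=
  (∀ k l : ℤ, 0 ≤ a k l) ∧ ∀ k l : ℤ, ¬(1 ≤ k ∧ k < l ∧ l ≤ (n : ℤ) + 1) → a k l = 0

/-- The `p`-th smallest element (1-indexed) `k_p` of a Maya diagram `K`. -/
def kth (K : Finset ℕ) (p : ℕ) : ℕ := (K.sort (· ≤ ·)).getD (p - 1) 0

/-- `C = (c_{p,q})_{1 ≤ p ≤ q ≤ l}` (with `l = |K|`) is a `K`-tableau: an upper-triangular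
integer matrix with `c_{p,p} = k_p`, `c_{p,q} ≤ c_{p,q+1}` and `c_{p,q} < c_{p+1,q}`. -/
def IsKTab (K : Finset ℕ) (c : ℕ → ℕ → ℤ) : Prop :=
  (∀ p : ℕ, 1 ≤ p → p ≤ K.card → c p p = (kth K p : ℤ)) ∧
  (∀ p q : ℕ, 1 ≤ p → p ≤ q → q + 1 ≤ K.card → c p q ≤ c p (q + 1)) ∧
  (∀ p q : ℕ, 1 ≤ p → p + 1 ≤ q → q ≤ K.card → c p q < c (p + 1) q)

/-- `Σ_{1 ≤ p < q ≤ l} a_{c_{p,q}, c_{p,q}+(q−p)}`. -/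
def tabSum (a : ℤ → ℤ → ℤ) (K : Finset ℕ) (c : ℕ → ℕ → ℤ) : ℤ :=
  ∑ p ∈ Finset.Icc 1 K.card, ∑ q ∈ Finset.Icc (p + 1) K.card,
    a (c p q) (c p q + ((q : ℤ) - (p : ℤ)))

/-- `M_K(a) = −Σ_{j=1}^{l} Σ_{i=1}^{k_j−1} a_{i,k_j} + min{ tabSum over K-tableaux }`,
for `K ∈ M_n^×`, with the conventions `M_∅(a) = M_{[1,n+1]}(a) = 0`. -/
noncomputable def MK (n : ℕ) (a : ℤ → ℤ → ℤ) (K : Finset ℕ) : ℤ :=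
  if K = ∅ ∨ K = Finset.Icc 1 (n + 1) then 0
  else
    -(∑ k ∈ K, ∑ s ∈ Finset.Icc 1 (k - 1), a (s : ℤ) (k : ℤ)) +
      sInf {z : ℤ | ∃ c : ℕ → ℕ → ℤ, IsKTab K c ∧ z = tabSum a K c}
/-- `A_l^{*(i)}(a) = Σ_{t=l+1}^{n+1} (a_{i,t} − a_{i+1,t+1})`. -/
def Astar (n : ℕ) (a : ℤ → ℤ → ℤ) (i l : ℕ) : ℤ :=
  ∑ t ∈ Finset.Icc (l + 1) (n + 1), (a (i : ℤ) (t : ℤ) - a ((i : ℤ) + 1) ((t : ℤ) + 1))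

/-- `ε_i^*(a) = max{A_i^{*(i)}(a),…,A_n^{*(i)}(a)}`. -/
def epsStar (n : ℕ) (a : ℤ → ℤ → ℤ) (i : ℕ) : ℤ :=
  ((Finset.Icc i n).image (Astar n a i)).max.unbotD 0

/-- `l_f(a,i)`: the minimal `l ∈ [i,n]` with `A_l^{*(i)}(a) = ε_i^*(a)`. -/
def lfStar (n : ℕ) (a : ℤ → ℤ → ℤ) (i : ℕ) : ℕ :=
  (((Finset.Icc i n).filter fun l => Astar n a i l = epsStar n a i).min).untopD 0

/-- `l_e(a,i)`: the maximal `l ∈ [i,n]` with `A_l^{*(i)}(a) = ε_i^*(a)`. -/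
def leStar (n : ℕ) (a : ℤ → ℤ → ℤ) (i : ℕ) : ℕ :=
  (((Finset.Icc i n).filter fun l => Astar n a i l = epsStar n a i).max).unbotD 0

/-- The operator `f̃_i^*`: increase `a_{i,l_f+1}` by 1 and decrease `a_{i+1,l_f+1}` by 1
(the latter discarded when `l_f = i`, the entry `(i+1,i+1)` being out of range). -/
def ftilStar (n : ℕ) (a : ℤ → ℤ → ℤ) (i : ℕ) : ℤ → ℤ → ℤ := fun k l =>
  if k = (i : ℤ) ∧ l = (lfStar n a i : ℤ) + 1 then a k l + 1
  else if k = (i : ℤ) + 1 ∧ l = (lfStar n a i : ℤ) + 1 ∧ (i : ℤ) < (lfStar n a i : ℤ) then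
    a k l - 1
  else a k l

/-- The operator `ẽ_i^*` (for `ε_i^*(a) > 0`): decrease `a_{i,l_e+1}` by 1 and increase
`a_{i+1,l_e+1}` by 1 (the latter discarded when `l_e = i`). -/
def etilStar (n : ℕ) (a : ℤ → ℤ → ℤ) (i : ℕ) : ℤ → ℤ → ℤ := fun k l =>
  if k = (i : ℤ) ∧ l = (leStar n a i : ℤ) + 1 then a k l - 1
  else if k = (i : ℤ) + 1 ∧ l = (leStar n a i : ℤ) + 1 ∧ (i : ℤ) < (leStar n a i : ℤ) then
    a k l + 1
  else a k l

/-- `m_j(a) = Σ_{k=1}^{j} Σ_{l=j+1}^{n+1} a_{k,l}` (so `m_0 = m_{n+1} = 0`). -/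
def mwt (n : ℕ) (a : ℤ → ℤ → ℤ) (j : ℕ) : ℤ :=
  ∑ k ∈ Finset.Icc 1 j, ∑ l ∈ Finset.Icc (j + 1) (n + 1), a (k : ℤ) (l : ℤ)

/-! Read a tableau by its diagonals, or layers: consecutive layers interlace, so the minimum in
`M_K` is a dynamic program over layers, the `d`-th layer contributing `Σ a_{c,c+d}` over its
entries `c`.

Fix `i`, let `A_l = A_l^{*(i)}(a)` and `R_l = max_{l' ≥ l} A_{l'}`, so that `R_i = ε_i^*(a)`. Each
`ẽ_i^*` lowers `R_l` by one exactly for `l ≤ l_e`. Hence `ā` arises from `a` by moving the amount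
`R_l − R_{l+1}` from `a_{i,l+1}` to `a_{i+1,l+1}` for all `l ≥ i` (discarding it when `l = i`).

Let `V_a(x)` be the minimal weight above a `d`-th layer `x`, and put `r_d = R_{i+d} − R_{i+d+1}` and
`g_d = R_{i+d} − A_{i+d}`. If `x` contains `i + 1` but not `i`, then
`V_a(x) = min (V_ā(x) + r_d) (V_ā(s_i x) + g_d)`.
This follows by induction on the size of the tableau, together with companion formulas for the other
`x`. Exchanging `i` and `i + 1` in layers preserves interlacing except in controlled cases, and the
induction closes because `min (r_d) (g_d) = 0`, a restatement of `R_l = max (A_l) (R_{l+1})`.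
The case `d = 0` is the theorem once the column sums in `M_K` and the weight are expressed through
`R` and `A`. -/

section Sums

variable {M : Type*} [AddCommMonoid M]

theorem sum_Icc_eq_add_sum_Icc_add_one {a b : ℕ} (hab : a ≤ b) (f : ℕ → M) :
    ∑ q ∈ Finset.Icc a b, f q = f a + ∑ q ∈ Finset.Icc (a + 1) b, f q := by
  rw [Finset.Icc_add_one_left_eq_Ioc, Finset.add_sum_Ioc_eq_sum_Icc hab]

theorem sum_Icc_add_one_add_one (a b : ℕ) (f : ℕ → M) :
    ∑ q ∈ Finset.Icc (a + 1) (b + 1), f q = ∑ q ∈ Finset.Icc a b, f (q + 1) := by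
  rw [← Finset.map_add_right_Icc, Finset.sum_map]
  rfl

end Sums

section Swap

variable {α : Type*} [LinearOrder α] {i j : α}

theorem strictMonoOn_swap_compl_left (h : i ⋖ j) : StrictMonoOn (Equiv.swap i j) {i}ᶜ := by
  intro k hk l hl hkl
  have hlt := h.lt
  have hgap := h.2 (c := k)
  simp only [Set.mem_compl_iff, Set.mem_singleton_iff, Equiv.swap_apply_def] at *
  grind

theorem strictMonoOn_swap_compl_right (h : i ⋖ j) : StrictMonoOn (Equiv.swap i j) {j}ᶜ := by
  intro k hk l hl hkl
  have hlt := h.lt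
  have hgap := h.2 (c := l)
  simp only [Set.mem_compl_iff, Set.mem_singleton_iff, Equiv.swap_apply_def] at *
  grind

end Swap

theorem swap_comp_swap_comp {α β : Type*} [DecidableEq α] (i j : α) (y : β → α) :
    Equiv.swap i j ∘ Equiv.swap i j ∘ y = y := by
  rw [← Function.comp_assoc, ← Equiv.coe_trans, Equiv.swap_swap, Equiv.coe_refl,
    Function.id_comp]

/-! ### Layers of a tableau -/

/-- The set of values of the layer `y 1, …, y m`. A layer is a diagonal
`c_{1,1+d}, …, c_{m,m+d}` of a tableau, encoded as a function of which only the values at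
`1, …, m` matter. -/
def entries (m : ℕ) (y : ℕ → ℤ) : Finset ℤ := (Finset.Icc 1 m).image y

/-- The relation between consecutive layers `x` (of length `m + 1`) and `y` (of length `m`) of a
tableau, into which its row and column conditions combine. -/
def Interlaces (m : ℕ) (x y : ℕ → ℤ) : Prop :=
  ∀ p ∈ Set.Icc 1 m, x p ≤ y p ∧ y p < x (p + 1)

/-- The contribution of the `d`-th layer `y` to the weight of a tableau. -/
def layerWeight (a : ℤ → ℤ → ℤ) (d m : ℕ) (y : ℕ → ℤ) : ℤ :=
  ∑ p ∈ Finset.Icc 1 m, a (y p) (y p + d)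

section Layers

variable {m : ℕ} {x y : ℕ → ℤ} {i : ℤ}

theorem mem_entries {k : ℤ} : k ∈ entries m y ↔ ∃ p ∈ Set.Icc 1 m, y p = k := by
  simp only [entries, Finset.mem_image, Finset.mem_Icc, Set.mem_Icc]

theorem apply_mem_entries {p : ℕ} (hp : p ∈ Set.Icc 1 m) : y p ∈ entries m y :=
  mem_entries.2 ⟨p, hp, rfl⟩

theorem apply_mem_entries_comp (e : ℤ ≃ ℤ) {k : ℤ} :
    e k ∈ entries m (e ∘ y) ↔ k ∈ entries m y := by
  simp only [mem_entries, Function.comp_apply, e.injective.eq_iff]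

theorem mem_entries_swap : i ∈ entries m (Equiv.swap i (i + 1) ∘ y) ↔ i + 1 ∈ entries m y := by
  simpa using apply_mem_entries_comp (m := m) (y := y) (Equiv.swap i (i + 1)) (k := i + 1)

theorem succ_mem_entries_swap :
    i + 1 ∈ entries m (Equiv.swap i (i + 1) ∘ y) ↔ i ∈ entries m y := by
  simpa using apply_mem_entries_comp (m := m) (y := y) (Equiv.swap i (i + 1)) (k := i)

theorem entries_subset_compl_singleton {k : ℤ} (hk : k ∉ entries m y) :
    ∀ p ∈ Set.Icc 1 m, y p ∈ ({k}ᶜ : Set ℤ) := by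
  rintro p hp rfl
  exact hk (apply_mem_entries hp)

theorem sum_entries (hy : StrictMonoOn y (Set.Icc 1 m)) (f : ℤ → ℤ) :
    ∑ k ∈ entries m y, f k = ∑ p ∈ Finset.Icc 1 m, f (y p) :=
  Finset.sum_image <| by simpa using hy.injOn

namespace Interlaces

theorem strictMonoOn (h : Interlaces m x y) : StrictMonoOn y (Set.Icc 1 m) :=
  strictMonoOn_of_lt_add_one Set.ordConnected_Icc fun p _ hp hp' =>
    (h p hp).2.trans_le (h (p + 1) hp').1

theorem comp {f : ℤ → ℤ} {s : Set ℤ} (h : Interlaces m x y) (hf : StrictMonoOn f s)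
    (hx : ∀ p ∈ Set.Icc 1 (m + 1), x p ∈ s) (hy : ∀ p ∈ Set.Icc 1 m, y p ∈ s) :
    Interlaces m (f ∘ x) (f ∘ y) := by
  intro p hp
  have hxp : x p ∈ s := hx p ⟨hp.1, hp.2.trans m.le_succ⟩
  have hxp' : x (p + 1) ∈ s := hx (p + 1) ⟨p.succ_pos, Nat.succ_le_succ hp.2⟩
  exact ⟨hf.monotoneOn hxp (hy p hp) (h p hp).1, hf (hy p hp) hxp' (h p hp).2⟩

theorem succ_mem_entries (h : Interlaces m x y) (hi : i ∈ entries m y)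
    (hi' : i + 1 ∈ entries m y) : i + 1 ∈ entries (m + 1) x := by
  obtain ⟨p, hp, hyp⟩ := mem_entries.1 hi
  obtain ⟨q, hq, hyq⟩ := mem_entries.1 hi'
  have hpq : p < q := (h.strictMonoOn.lt_iff_lt hp hq).1 (by lia)
  have hp' : p + 1 ∈ Set.Icc 1 m := ⟨p.succ_pos, hpq.trans_le hq.2⟩
  have hle : y (p + 1) ≤ y q := h.strictMonoOn.monotoneOn hp' hq hpq
  refine mem_entries.2 ⟨p + 1, ⟨hp'.1, hp'.2.trans m.le_succ⟩, ?_⟩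
  linarith [(h p hp).2, (h (p + 1) hp').1]

theorem mem_entries_of_succ_mem (h : Interlaces m x y) (hx : StrictMonoOn x (Set.Icc 1 (m + 1)))
    (hi : i ∈ entries (m + 1) x) (hi' : i + 1 ∈ entries (m + 1) x) : i ∈ entries m y := by
  obtain ⟨p, hp, hxp⟩ := mem_entries.1 hi
  obtain ⟨q, hq, hxq⟩ := mem_entries.1 hi'
  have hpq : p < q := (hx.lt_iff_lt hp hq).1 (by lia)
  have hle : x (p + 1) ≤ x q := hx.monotoneOn ⟨p.succ_pos, hpq.trans_le hq.2⟩ hq hpq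
  have hpm : p ∈ Set.Icc 1 m := ⟨hp.1, Nat.le_of_lt_succ (hpq.trans_le hq.2)⟩
  refine mem_entries.2 ⟨p, hpm, ?_⟩
  linarith [(h p hpm).1, (h p hpm).2]

theorem swap_right (h : Interlaces m x y) (hx : i + 1 ∉ entries (m + 1) x) :
    Interlaces m x (Equiv.swap i (i + 1) ∘ y) := by
  intro p hp
  have hy := h p hp
  have hxp := entries_subset_compl_singleton hx p ⟨hp.1, hp.2.trans m.le_succ⟩
  have hxp' := entries_subset_compl_singleton hx (p + 1) ⟨p.succ_pos, Nat.succ_le_succ hp.2⟩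
  simp only [Set.mem_compl_iff, Set.mem_singleton_iff] at hxp hxp'
  simp only [Function.comp_apply, Equiv.swap_apply_def]
  grind

theorem swap_swap (h : Interlaces m x y) (hx : i ∉ entries (m + 1) x) (hy : i ∉ entries m y) :
    Interlaces m (Equiv.swap i (i + 1) ∘ x) (Equiv.swap i (i + 1) ∘ y) :=
  h.comp (strictMonoOn_swap_compl_left (Order.covBy_add_one i))
    (entries_subset_compl_singleton hx) (entries_subset_compl_singleton hy)

theorem swap_swap_of_succ (h : Interlaces m x y) (hx : i + 1 ∉ entries (m + 1) x)
    (hy : i + 1 ∉ entries m y) :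
    Interlaces m (Equiv.swap i (i + 1) ∘ x) (Equiv.swap i (i + 1) ∘ y) :=
  h.comp (strictMonoOn_swap_compl_right (Order.covBy_add_one i))
    (entries_subset_compl_singleton hx) (entries_subset_compl_singleton hy)

theorem swap_left_iff (hx : i ∉ entries (m + 1) x) (hy : i ∉ entries m y) :
    Interlaces m (Equiv.swap i (i + 1) ∘ x) y ↔ Interlaces m x y := by
  refine forall₂_congr fun p hp => ?_
  have hxp := entries_subset_compl_singleton hx p ⟨hp.1, hp.2.trans m.le_succ⟩
  have hxp' := entries_subset_compl_singleton hx (p + 1) ⟨p.succ_pos, Nat.succ_le_succ hp.2⟩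
  have hyp := entries_subset_compl_singleton hy p hp
  simp only [Set.mem_compl_iff, Set.mem_singleton_iff] at hxp hxp' hyp
  simp only [Function.comp_apply, Equiv.swap_apply_def]
  grind

end Interlaces

theorem layerWeight_swap (b : ℤ → ℤ → ℤ) (d : ℕ) (hy : StrictMonoOn y (Set.Icc 1 m))
    (hi : i ∉ entries m y) (hi' : i + 1 ∈ entries m y) :
    layerWeight b d m (Equiv.swap i (i + 1) ∘ y) =
      layerWeight b d m y + (b i (i + d) - b (i + 1) (i + 1 + d)) := by
  set f : ℤ → ℤ := fun k => b k (k + d)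
  have hf : ∀ k ∈ entries m y, f (Equiv.swap i (i + 1) k) =
      f k + if k = i + 1 then f i - f (i + 1) else 0 := by
    intro k hk
    rw [Equiv.swap_apply_def, if_neg (ne_of_mem_of_not_mem hk hi)]
    split_ifs with h
    · rw [h, add_sub_cancel]
    · rw [add_zero]
  calc layerWeight b d m (Equiv.swap i (i + 1) ∘ y)
      = ∑ k ∈ entries m y, f (Equiv.swap i (i + 1) k) :=
        (sum_entries hy fun k => f (Equiv.swap i (i + 1) k)).symm
    _ = ∑ k ∈ entries m y, f k + (f i - f (i + 1)) := by
        rw [Finset.sum_congr rfl hf, Finset.sum_add_distrib, Finset.sum_ite_eq', if_pos hi']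
    _ = layerWeight b d m y + (f i - f (i + 1)) := by rw [sum_entries hy]; rfl

end Layers

/-! ### Peeling off the diagonal of a tableau -/

/-- `IsKTab` with an arbitrary sequence `x 1, …, x m` on the diagonal. -/
def IsTableau (m : ℕ) (x : ℕ → ℤ) (c : ℕ → ℕ → ℤ) : Prop :=
  (∀ p : ℕ, 1 ≤ p → p ≤ m → c p p = x p) ∧
  (∀ p q : ℕ, 1 ≤ p → p ≤ q → q + 1 ≤ m → c p q ≤ c p (q + 1)) ∧
  (∀ p q : ℕ, 1 ≤ p → p + 1 ≤ q → q ≤ m → c p q < c (p + 1) q)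

/-- The weight of the part of a tableau above its diagonal, when that diagonal is regarded as the
`d`-th layer of a larger tableau; `d = 0` gives `tabSum`. -/
def offDiagWeight (a : ℤ → ℤ → ℤ) (d m : ℕ) (c : ℕ → ℕ → ℤ) : ℤ :=
  ∑ p ∈ Finset.Icc 1 m, ∑ q ∈ Finset.Icc (p + 1) m,
    a (c p q) (c p q + ((q : ℤ) - (p : ℤ)) + d)

/-- The minimal off-diagonal weight of a tableau with diagonal `x`, placed as the `d`-th layer,
is at most `z`. Bounding the minimum instead of naming it avoids conditions for its existence. -/
def OffDiagLE (a : ℤ → ℤ → ℤ) (d m : ℕ) (x : ℕ → ℤ) (z : ℤ) : Prop :=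
  ∃ c, IsTableau m x c ∧ offDiagWeight a d m c ≤ z

/-- The variant of `OffDiagLE` in which the diagonal contributes to the weight as well. -/
def TotalLE (a : ℤ → ℤ → ℤ) (d m : ℕ) (y : ℕ → ℤ) (z : ℤ) : Prop :=
  OffDiagLE a d m y (z - layerWeight a d m y)

/-- Adjoins the new diagonal `x` to the tableau `c`, whose layers move one step up. -/
def consDiag (x : ℕ → ℤ) (c : ℕ → ℕ → ℤ) (p q : ℕ) : ℤ := if p < q then c p (q - 1) else x p

section Tableaux

variable {a : ℤ → ℤ → ℤ} {d m : ℕ} {x y : ℕ → ℤ} {c : ℕ → ℕ → ℤ} {z : ℤ}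

theorem consDiag_add_one {p q : ℕ} (h : p ≤ q) : consDiag x c p (q + 1) = c p q := by
  rw [consDiag, if_pos (Nat.lt_succ_of_le h), Nat.add_sub_cancel]

theorem consDiag_self (p : ℕ) : consDiag x c p p = x p := if_neg (lt_irrefl p)

theorem IsTableau.interlaces (h : IsTableau (m + 1) x c) : Interlaces m x fun p => c p (p + 1) := by
  obtain ⟨hdiag, hrow, hcol⟩ := h
  rintro p ⟨hp, hpm⟩
  have hxp := hdiag p hp (by lia)
  have hxp' := hdiag (p + 1) (by lia) (by lia)
  exact ⟨hxp ▸ hrow p p hp le_rfl (by lia), hxp' ▸ hcol p (p + 1) hp le_rfl (by lia)⟩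

theorem IsTableau.tail (h : IsTableau (m + 1) x c) :
    IsTableau m (fun p => c p (p + 1)) fun p q => c p (q + 1) :=
  ⟨fun _ _ _ => rfl,
    fun p q hp hpq hq => h.2.1 p (q + 1) hp (by lia) (by lia),
    fun p q hp hpq hq => h.2.2 p (q + 1) hp (by lia) (by lia)⟩

theorem isTableau_consDiag (h : IsTableau m y c) (hxy : Interlaces m x y) :
    IsTableau (m + 1) x (consDiag x c) := by
  obtain ⟨hdiag, hrow, hcol⟩ := h
  refine ⟨fun p _ _ => consDiag_self p, fun p q hp hpq hq => ?_, fun p q hp hpq hq => ?_⟩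
  · rw [consDiag_add_one hpq]
    obtain rfl | hpq := hpq.eq_or_lt
    · rw [consDiag_self, hdiag p hp (by lia)]
      exact (hxy p ⟨hp, by lia⟩).1
    · obtain ⟨q, rfl⟩ := Nat.exists_eq_add_of_lt hpq
      rw [consDiag_add_one (by lia)]
      exact hrow p _ hp (by lia) (by lia)
  · obtain rfl | hpq := hpq.eq_or_lt
    · rw [consDiag_self, consDiag_add_one le_rfl, hdiag p hp (by lia)]
      exact (hxy p ⟨hp, by lia⟩).2
    · obtain ⟨q, rfl⟩ := Nat.exists_eq_add_of_lt hpq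
      rw [consDiag_add_one (by lia), consDiag_add_one (by lia)]
      exact hcol p _ hp (by lia) (by lia)

theorem isTableau_of_strictMonoOn (hx : StrictMonoOn x (Set.Icc 1 m)) :
    IsTableau m x fun p _ => x p :=
  ⟨fun _ _ _ => rfl, fun _ _ _ _ _ => le_rfl,
    fun p q hp hpq hq => hx ⟨hp, by lia⟩ ⟨by lia, by lia⟩ p.lt_succ_self⟩

theorem layerWeight_congr (h : Set.EqOn x y (Set.Icc 1 m)) :
    layerWeight a d m x = layerWeight a d m y :=
  Finset.sum_congr rfl fun p hp => by rw [h (Finset.mem_Icc.1 hp)]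

theorem offDiagWeight_congr {c' : ℕ → ℕ → ℤ} (h : ∀ p q, p < q → c p q = c' p q) :
    offDiagWeight a d m c = offDiagWeight a d m c' :=
  Finset.sum_congr rfl fun p _ => Finset.sum_congr rfl fun q hq => by
    rw [h p q (Finset.mem_Icc.1 hq).1]

theorem offDiagWeight_nonneg (ha : ∀ k l, 0 ≤ a k l) : 0 ≤ offDiagWeight a d m c :=
  Finset.sum_nonneg fun _ _ => Finset.sum_nonneg fun _ _ => ha _ _

theorem offDiagWeight_add_one (a : ℤ → ℤ → ℤ) (d m : ℕ) (c : ℕ → ℕ → ℤ) :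
    offDiagWeight a d (m + 1) c =
      layerWeight a (d + 1) m (fun p => c p (p + 1)) +
        offDiagWeight a (d + 1) m fun p q => c p (q + 1) := by
  unfold offDiagWeight layerWeight
  rw [Finset.sum_Icc_succ_top m.succ_pos, Finset.Icc_eq_empty (by lia : ¬m + 1 + 1 ≤ m + 1),
    Finset.sum_empty, add_zero, ← Finset.sum_add_distrib]
  refine Finset.sum_congr rfl fun p hp => ?_
  rw [sum_Icc_eq_add_sum_Icc_add_one (Nat.add_le_add_right (Finset.mem_Icc.1 hp).2 1),
    sum_Icc_add_one_add_one]
  push_cast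
  ring_nf

theorem IsTableau.offDiagWeight_consDiag (h : IsTableau m y c) :
    offDiagWeight a d (m + 1) (consDiag x c) =
      layerWeight a (d + 1) m y + offDiagWeight a (d + 1) m c := by
  rw [offDiagWeight_add_one]
  congr 1
  · exact layerWeight_congr fun p hp =>
      (consDiag_add_one le_rfl).trans (h.1 p hp.1 hp.2)
  · exact offDiagWeight_congr fun p q hpq => consDiag_add_one hpq.le

theorem OffDiagLE.mono {z' : ℤ} (h : OffDiagLE a d m x z) (hz : z ≤ z') : OffDiagLE a d m x z' :=
  h.imp fun _ hc => ⟨hc.1, hc.2.trans hz⟩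

theorem TotalLE.mono {z' : ℤ} (h : TotalLE a d m x z) (hz : z ≤ z') : TotalLE a d m x z' :=
  OffDiagLE.mono h (sub_le_sub_right hz _)

theorem offDiagLE_congr (h : Set.EqOn x y (Set.Icc 1 m)) :
    OffDiagLE a d m x z ↔ OffDiagLE a d m y z := by
  have hdiag (c : ℕ → ℕ → ℤ) : IsTableau m x c ↔ IsTableau m y c :=
    and_congr_left' <| forall₃_congr fun p hp hpm => by rw [h ⟨hp, hpm⟩]
  simp only [OffDiagLE, hdiag]

theorem offDiagLE_add_one_iff :
    OffDiagLE a d (m + 1) x z ↔ ∃ y, Interlaces m x y ∧ TotalLE a (d + 1) m y z := by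
  constructor
  · rintro ⟨c, hc, hz⟩
    refine ⟨_, hc.interlaces, _, hc.tail, ?_⟩
    rwa [le_sub_iff_add_le', ← offDiagWeight_add_one]
  · rintro ⟨y, hxy, c, hc, hz⟩
    refine ⟨consDiag x c, isTableau_consDiag hc hxy, ?_⟩
    rwa [hc.offDiagWeight_consDiag, ← le_sub_iff_add_le']

end Tableaux

/-! ### Comparing minimal weights for two data -/

/-- The datum `b` arises from `a` by moving entries from row `i` to row `i + 1`, where `r d` is the
amount moved in column `i + d + 1`. The potential `g` measures how much cheaper, for `b`, it becomes
to replace `i + 1` by `i` in a layer; it may be positive only where nothing is moved. -/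
structure IsRowTransfer (i : ℤ) (a b : ℤ → ℤ → ℤ) (r g : ℕ → ℤ) : Prop where
  row (d : ℕ) : b i (i + (d + 1 : ℕ)) = a i (i + (d + 1 : ℕ)) - r d
  row_succ (d : ℕ) :
    b (i + 1) (i + 1 + (d + 1 : ℕ)) = a (i + 1) (i + 1 + (d + 1 : ℕ)) + r (d + 1)
  row_of_ne {k : ℤ} (l : ℤ) : k ≠ i → k ≠ i + 1 → b k l = a k l
  potential_add (d : ℕ) :
    g d + b i (i + (d + 1 : ℕ)) = g (d + 1) + a (i + 1) (i + 1 + (d + 1 : ℕ))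
  min_eq_zero (d : ℕ) : min (r d) (g d) = 0

/-- The relation between the minimal off-diagonal weights `V_a` and `V_b` for `a` and `b`:
`V_a(x)` is `V_b(x)`, `V_b(x) + r` or `min (V_b(x) + r) (V_b(s_i x) + g)`, depending on which of
`i` and `i + 1` occur in the diagonal `x`. -/
structure OffDiagComparison (i : ℤ) (a b : ℤ → ℤ → ℤ) (r g : ℤ) (d m : ℕ) : Prop where
  of_succ_notMem {x : ℕ → ℤ} (z : ℤ) : i + 1 ∉ entries m x →
    (OffDiagLE a d m x z ↔ OffDiagLE b d m x z)
  of_mem_of_succ_mem {x : ℕ → ℤ} (z : ℤ) : StrictMonoOn x (Set.Icc 1 m) → i ∈ entries m x →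
    i + 1 ∈ entries m x → (OffDiagLE a d m x z ↔ OffDiagLE b d m x (z - r))
  of_notMem_of_succ_mem {x : ℕ → ℤ} (z : ℤ) : i ∉ entries m x → i + 1 ∈ entries m x →
    (OffDiagLE a d m x z ↔
      OffDiagLE b d m x (z - r) ∨ OffDiagLE b d m (Equiv.swap i (i + 1) ∘ x) (z - g))

/-- The analogue of `OffDiagComparison` for the minimal weights `W_a` and `W_b` that include the
diagonal `y`: `W_a(y)` is `W_b(y)`, `W_b(y) + r` or `min (W_b(y)) (W_b(s_i y) + g)`. -/
structure TotalComparison (i : ℤ) (a b : ℤ → ℤ → ℤ) (r g : ℤ) (d m : ℕ) : Prop where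
  of_notMem_of_succ_notMem {y : ℕ → ℤ} (z : ℤ) : StrictMonoOn y (Set.Icc 1 m) →
    i ∉ entries m y → i + 1 ∉ entries m y → (TotalLE a d m y z ↔ TotalLE b d m y z)
  of_mem {y : ℕ → ℤ} (z : ℤ) : StrictMonoOn y (Set.Icc 1 m) → i ∈ entries m y →
    (TotalLE a d m y z ↔ TotalLE b d m y (z - r))
  of_notMem_of_succ_mem {y : ℕ → ℤ} (z : ℤ) : StrictMonoOn y (Set.Icc 1 m) → i ∉ entries m y →
    i + 1 ∈ entries m y → (TotalLE a d m y z ↔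
      TotalLE b d m y z ∨ TotalLE b d m (Equiv.swap i (i + 1) ∘ y) (z - g))

section Comparison

variable {i : ℤ} {a b : ℤ → ℤ → ℤ}

theorem IsRowTransfer.layerWeight_eq {r g : ℕ → ℤ} (T : IsRowTransfer i a b r g) (d : ℕ) {m : ℕ}
    {y : ℕ → ℤ} (hy : StrictMonoOn y (Set.Icc 1 m)) :
    layerWeight a (d + 1) m y = layerWeight b (d + 1) m y +
      (if i ∈ entries m y then r d else 0) - (if i + 1 ∈ entries m y then r (d + 1) else 0) := by
  have hentry (k : ℤ) : a k (k + (d + 1 : ℕ)) = b k (k + (d + 1 : ℕ)) +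
      (if k = i then r d else 0) - (if k = i + 1 then r (d + 1) else 0) := by
    by_cases hi : k = i
    · rw [if_pos hi, if_neg (by lia), hi, T.row]
      ring
    by_cases hi' : k = i + 1
    · rw [if_neg hi, if_pos hi', hi', T.row_succ]
      ring
    · rw [if_neg hi, if_neg hi', T.row_of_ne _ hi hi']
      ring
  have hsum (c : ℤ → ℤ → ℤ) :
      layerWeight c (d + 1) m y = ∑ k ∈ entries m y, c k (k + (d + 1 : ℕ)) :=
    (sum_entries hy fun k => c k (k + (d + 1 : ℕ))).symm
  rw [hsum a, hsum b, Finset.sum_congr rfl fun k _ => hentry k, Finset.sum_sub_distrib,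
    Finset.sum_add_distrib, Finset.sum_ite_eq', Finset.sum_ite_eq']

theorem OffDiagComparison.total {r g : ℕ → ℤ} {d m : ℕ} (T : IsRowTransfer i a b r g)
    (C : OffDiagComparison i a b (r (d + 1)) (g (d + 1)) (d + 1) m) :
    TotalComparison i a b (r d) (g d) (d + 1) m where
  of_notMem_of_succ_notMem z hy hi hi' := by
    have hweight := T.layerWeight_eq d hy
    rw [if_neg hi, if_neg hi', add_zero, sub_zero] at hweight
    rw [TotalLE, C.of_succ_notMem _ hi', hweight, TotalLE]
  of_mem {y} z hy hi := by
    have hweight := T.layerWeight_eq d hy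
    rw [if_pos hi] at hweight
    by_cases hi' : i + 1 ∈ entries m y
    · rw [if_pos hi'] at hweight
      rw [TotalLE, C.of_mem_of_succ_mem _ hy hi hi', hweight, TotalLE]
      ring_nf
    · rw [if_neg hi'] at hweight
      rw [TotalLE, C.of_succ_notMem _ hi', hweight, TotalLE]
      ring_nf
  of_notMem_of_succ_mem {y} z hy hi hi' := by
    have hweight := T.layerWeight_eq d hy
    rw [if_neg hi, if_pos hi', add_zero] at hweight
    have hswap := layerWeight_swap b (d + 1) hy hi hi'
    have hstay : z - layerWeight a (d + 1) m y - r (d + 1) = z - layerWeight b (d + 1) m y := by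
      rw [hweight]
      ring
    have hmove : z - layerWeight a (d + 1) m y - g (d + 1) =
        z - g d - layerWeight b (d + 1) m (Equiv.swap i (i + 1) ∘ y) := by
      linarith [T.row_succ d, T.potential_add d]
    rw [TotalLE, C.of_notMem_of_succ_mem _ hi hi', hstay, hmove, TotalLE, TotalLE]

namespace TotalComparison

variable {r g : ℤ} {d m : ℕ} {x y : ℕ → ℤ} {z : ℤ}

theorem totalLE_of_notMem (C : TotalComparison i a b r g d m) (hy : StrictMonoOn y (Set.Icc 1 m))
    (hi : i ∉ entries m y) (h : TotalLE b d m y z) : TotalLE a d m y z := by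
  by_cases hi' : i + 1 ∈ entries m y
  · exact (C.of_notMem_of_succ_mem z hy hi hi').2 (Or.inl h)
  · exact (C.of_notMem_of_succ_notMem z hy hi hi').2 h

theorem totalLE_or_swap_iff_of_succ_mem (C : TotalComparison i a b r g d m) (hrg : min r g = 0)
    (hy : StrictMonoOn y (Set.Icc 1 m))
    (hy' : StrictMonoOn (Equiv.swap i (i + 1) ∘ y) (Set.Icc 1 m))
    (hi : i ∉ entries m y) (hi' : i + 1 ∈ entries m y) :
    TotalLE a d m y z ∨ TotalLE a d m (Equiv.swap i (i + 1) ∘ y) z ↔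
      TotalLE b d m y z ∨ TotalLE b d m (Equiv.swap i (i + 1) ∘ y) z := by
  rw [C.of_notMem_of_succ_mem z hy hi hi', C.of_mem z hy' (mem_entries_swap.2 hi'), or_assoc]
  refine or_congr_right ⟨?_, fun h => ?_⟩
  · rintro (h | h) <;> exact h.mono (by lia)
  · obtain hr | hg : r = 0 ∨ g = 0 := by lia
    · exact Or.inr (by rwa [hr, sub_zero])
    · exact Or.inl (by rwa [hg, sub_zero])

theorem totalLE_or_swap_iff (C : TotalComparison i a b r g d m) (hrg : min r g = 0)
    (hy : StrictMonoOn y (Set.Icc 1 m))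
    (hy' : StrictMonoOn (Equiv.swap i (i + 1) ∘ y) (Set.Icc 1 m))
    (hii' : ¬(i ∈ entries m y ∧ i + 1 ∈ entries m y)) :
    TotalLE a d m y z ∨ TotalLE a d m (Equiv.swap i (i + 1) ∘ y) z ↔
      TotalLE b d m y z ∨ TotalLE b d m (Equiv.swap i (i + 1) ∘ y) z := by
  by_cases hi : i ∈ entries m y
  · have hi' : i + 1 ∉ entries m y := fun hi' => hii' ⟨hi, hi'⟩
    have h := C.totalLE_or_swap_iff_of_succ_mem (z := z) hrg hy' (by rwa [swap_comp_swap_comp])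
      (mem_entries_swap.not.2 hi') (succ_mem_entries_swap.2 hi)
    rwa [swap_comp_swap_comp, or_comm, or_comm (a := TotalLE b d m _ z)] at h
  by_cases hi' : i + 1 ∈ entries m y
  · exact C.totalLE_or_swap_iff_of_succ_mem hrg hy hy' hi hi'
  · exact or_congr (C.of_notMem_of_succ_notMem z hy hi hi') (C.of_notMem_of_succ_notMem z hy'
      (mem_entries_swap.not.2 hi') (succ_mem_entries_swap.not.2 hi))

theorem offDiagLE_iff_of_succ_notMem (C : TotalComparison i a b r g (d + 1) m)
    (hrg : min r g = 0) (hi' : i + 1 ∉ entries (m + 1) x) :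
    OffDiagLE a d (m + 1) x z ↔ OffDiagLE b d (m + 1) x z := by
  have hpair {y : ℕ → ℤ} (hy : Interlaces m x y) :=
    C.totalLE_or_swap_iff (z := z) hrg hy.strictMonoOn (hy.swap_right hi').strictMonoOn
      fun h => hi' (hy.succ_mem_entries h.1 h.2)
  rw [offDiagLE_add_one_iff, offDiagLE_add_one_iff]
  constructor
  · rintro ⟨y, hy, h⟩
    exact ((hpair hy).1 (Or.inl h)).elim (fun h => ⟨y, hy, h⟩) fun h => ⟨_, hy.swap_right hi', h⟩
  · rintro ⟨y, hy, h⟩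
    exact ((hpair hy).2 (Or.inl h)).elim (fun h => ⟨y, hy, h⟩) fun h => ⟨_, hy.swap_right hi', h⟩

theorem offDiagLE_or_of_offDiagLE (C : TotalComparison i a b r g (d + 1) m) (hrg : min r g = 0)
    (hi : i ∉ entries (m + 1) x) (h : OffDiagLE a d (m + 1) x z) :
    OffDiagLE b d (m + 1) x (z - r) ∨
      OffDiagLE b d (m + 1) (Equiv.swap i (i + 1) ∘ x) (z - g) := by
  simp only [offDiagLE_add_one_iff] at h ⊢
  obtain ⟨y, hxy, h⟩ := h
  by_cases hy : i ∈ entries m y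
  · exact Or.inl ⟨y, hxy, (C.of_mem z hxy.strictMonoOn hy).1 h⟩
  have hor : TotalLE b (d + 1) m y z ∨
      TotalLE b (d + 1) m (Equiv.swap i (i + 1) ∘ y) (z - g) := by
    by_cases hy' : i + 1 ∈ entries m y
    · exact (C.of_notMem_of_succ_mem z hxy.strictMonoOn hy hy').1 h
    · exact Or.inl ((C.of_notMem_of_succ_notMem z hxy.strictMonoOn hy hy').1 h)
  obtain h | h := hor
  · obtain hr | hg : r = 0 ∨ g = 0 := by lia
    · exact Or.inl ⟨y, hxy, by rwa [hr, sub_zero]⟩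
    · exact Or.inr ⟨y, (Interlaces.swap_left_iff hi hy).2 hxy, by rwa [hg, sub_zero]⟩
  · exact Or.inr ⟨_, hxy.swap_swap hi hy, h⟩

theorem offDiagLE_of_offDiagLE_sub (C : TotalComparison i a b r g (d + 1) m) (hr : 0 ≤ r)
    (h : OffDiagLE b d (m + 1) x (z - r)) : OffDiagLE a d (m + 1) x z := by
  rw [offDiagLE_add_one_iff] at h ⊢
  obtain ⟨y, hxy, h⟩ := h
  by_cases hy : i ∈ entries m y
  · exact ⟨y, hxy, (C.of_mem z hxy.strictMonoOn hy).2 h⟩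
  · exact ⟨y, hxy, C.totalLE_of_notMem hxy.strictMonoOn hy (h.mono (by lia))⟩

theorem offDiagLE_of_offDiagLE_swap (C : TotalComparison i a b r g (d + 1) m) (hg : 0 ≤ g)
    (hi : i ∉ entries (m + 1) x)
    (h : OffDiagLE b d (m + 1) (Equiv.swap i (i + 1) ∘ x) (z - g)) :
    OffDiagLE a d (m + 1) x z := by
  rw [offDiagLE_add_one_iff] at h ⊢
  obtain ⟨y, hxy, h⟩ := h
  by_cases hy : i ∈ entries m y
  · have hx' : i + 1 ∉ entries (m + 1) (Equiv.swap i (i + 1) ∘ x) := succ_mem_entries_swap.not.2 hi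
    have hy' : i + 1 ∉ entries m y := fun hy' => hx' (hxy.succ_mem_entries hy hy')
    have hxy' := hxy.swap_swap_of_succ hx' hy'
    rw [swap_comp_swap_comp] at hxy'
    refine ⟨_, hxy', (C.of_notMem_of_succ_mem z hxy'.strictMonoOn (mem_entries_swap.not.2 hy')
      (succ_mem_entries_swap.2 hy)).2 (Or.inr ?_)⟩
    rwa [swap_comp_swap_comp]
  · have hxy' := (Interlaces.swap_left_iff hi hy).1 hxy
    exact ⟨y, hxy', C.totalLE_of_notMem hxy'.strictMonoOn hy (h.mono (by lia))⟩

theorem offDiag (C : TotalComparison i a b r g (d + 1) m) (hrg : min r g = 0) :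
    OffDiagComparison i a b r g d (m + 1) where
  of_succ_notMem _ hi' := C.offDiagLE_iff_of_succ_notMem hrg hi'
  of_mem_of_succ_mem z hx hi hi' := by
    rw [offDiagLE_add_one_iff, offDiagLE_add_one_iff]
    exact exists_congr fun y => and_congr_right fun hxy =>
      C.of_mem z hxy.strictMonoOn (hxy.mem_entries_of_succ_mem hx hi hi')
  of_notMem_of_succ_mem _ hi _ :=
    ⟨C.offDiagLE_or_of_offDiagLE hrg hi, fun h => h.elim
      (C.offDiagLE_of_offDiagLE_sub (by lia)) (C.offDiagLE_of_offDiagLE_swap (by lia) hi)⟩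

end TotalComparison

theorem IsRowTransfer.offDiagComparison {r g : ℕ → ℤ} (T : IsRowTransfer i a b r g) (d m : ℕ) :
    OffDiagComparison i a b (r d) (g d) d m := by
  induction m generalizing d with
  | zero =>
    have hempty {x : ℕ → ℤ} {k : ℤ} : k ∉ entries 0 x := by simp [entries]
    exact {
      of_succ_notMem := fun _ _ => by simp [OffDiagLE, offDiagWeight, IsTableau]
      of_mem_of_succ_mem := fun _ _ hi => absurd hi hempty
      of_notMem_of_succ_mem := fun _ _ hi' => absurd hi' hempty }
  | succ m ih => exact ((ih (d + 1)).total T).offDiag (T.min_eq_zero d)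

end Comparison

/-! ### `K`-tableaux -/

/-- The minimum occurring in `M_K(a)`. It is attained when `a` is nonnegative. -/
noncomputable def minTabSum (a : ℤ → ℤ → ℤ) (K : Finset ℕ) : ℤ :=
  sInf {z : ℤ | ∃ c : ℕ → ℕ → ℤ, IsKTab K c ∧ z = tabSum a K c}

section KTableaux

variable {K : Finset ℕ}

theorem kth_eq_orderEmbOfFin {p : ℕ} (hp : p ∈ Set.Icc 1 K.card) :
    kth K p = K.orderEmbOfFin rfl ⟨p - 1, by grind⟩ := by
  rw [kth, Finset.orderEmbOfFin_apply, List.getD_eq_getElem]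
  rfl

theorem kth_mem {p : ℕ} (hp : p ∈ Set.Icc 1 K.card) : kth K p ∈ K :=
  kth_eq_orderEmbOfFin hp ▸ K.orderEmbOfFin_mem rfl _

theorem strictMonoOn_kth (K : Finset ℕ) : StrictMonoOn (kth K) (Set.Icc 1 K.card) := by
  intro p hp q hq hpq
  rw [kth_eq_orderEmbOfFin hp, kth_eq_orderEmbOfFin hq]
  exact (K.orderEmbOfFin rfl).strictMono (Fin.mk_lt_mk.2 (by grind))

theorem strictMonoOn_coe_kth (K : Finset ℕ) :
    StrictMonoOn (fun p => (kth K p : ℤ)) (Set.Icc 1 K.card) :=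
  Int.natCast_strictMono.comp_strictMonoOn (strictMonoOn_kth K)

theorem exists_kth_eq {k : ℕ} (hk : k ∈ K) : ∃ p ∈ Set.Icc 1 K.card, kth K p = k := by
  obtain ⟨j, rfl⟩ : k ∈ Set.range (K.orderEmbOfFin rfl) := by rwa [K.range_orderEmbOfFin rfl]
  have hj : (j : ℕ) + 1 ∈ Set.Icc 1 K.card := ⟨j.val.succ_pos, j.isLt⟩
  exact ⟨j + 1, hj, kth_eq_orderEmbOfFin hj⟩

theorem natCast_mem_entries_kth {k : ℕ} :
    (k : ℤ) ∈ entries K.card (fun p => (kth K p : ℤ)) ↔ k ∈ K := by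
  simp only [mem_entries, Nat.cast_inj]
  exact ⟨fun ⟨p, hp, h⟩ => h ▸ kth_mem hp, exists_kth_eq⟩

theorem eqOn_kth {m : ℕ} {x : ℕ → ℕ} (hx : StrictMonoOn x (Set.Icc 1 m))
    (hm : m = K.card) (hmem : ∀ p ∈ Set.Icc 1 m, x p ∈ K) : Set.EqOn x (kth K) (Set.Icc 1 m) := by
  subst hm
  have hmono : StrictMono fun j : Fin K.card => x (j + 1) := fun j k hjk =>
    hx (by grind) (by grind) (Nat.succ_lt_succ hjk)
  have huniq := K.orderEmbOfFin_unique rfl (fun j => hmem _ (by grind)) hmono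
  intro p hp
  rw [kth_eq_orderEmbOfFin hp, ← huniq]
  exact congrArg x (Nat.sub_add_cancel hp.1).symm

variable {i : ℕ}

theorem card_insert_erase_succ (hi : i ∉ K) (hi' : i + 1 ∈ K) :
    (insert i (K.erase (i + 1))).card = K.card := by
  rw [Finset.card_insert_of_notMem fun h => hi (Finset.mem_of_mem_erase h),
    Finset.card_erase_add_one hi']

theorem eqOn_swap_kth (hi : i ∉ K) (hi' : i + 1 ∈ K) :
    Set.EqOn (Equiv.swap (i : ℤ) (i + 1) ∘ fun p => (kth K p : ℤ))
      (fun p => (kth (insert i (K.erase (i + 1))) p : ℤ)) (Set.Icc 1 K.card) := by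
  have hne : ∀ p ∈ Set.Icc 1 K.card, kth K p ≠ i := fun p hp h => hi (h ▸ kth_mem hp)
  have hmono : StrictMonoOn (Equiv.swap i (i + 1) ∘ kth K) (Set.Icc 1 K.card) :=
    (strictMonoOn_swap_compl_left (Order.covBy_add_one i)).comp (strictMonoOn_kth K) hne
  have hswap := eqOn_kth hmono (card_insert_erase_succ hi hi').symm fun p hp => by
    have := kth_mem hp
    have := hne p hp
    grind
  intro p hp
  simp only [← hswap hp, Function.comp_apply, ← Nat.cast_succ, Nat.cast_injective.swap_apply]

theorem tabSum_eq_offDiagWeight (a : ℤ → ℤ → ℤ) (K : Finset ℕ) (c : ℕ → ℕ → ℤ) :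
    tabSum a K c = offDiagWeight a 0 K.card c := by
  simp only [tabSum, offDiagWeight, Nat.cast_zero, add_zero]

theorem isKTab_iff_isTableau {c : ℕ → ℕ → ℤ} :
    IsKTab K c ↔ IsTableau K.card (fun p => (kth K p : ℤ)) c := Iff.rfl

theorem minTabSum_le_iff {a : ℤ → ℤ → ℤ} (ha : ∀ k l, 0 ≤ a k l) {z : ℤ} :
    minTabSum a K ≤ z ↔ OffDiagLE a 0 K.card (fun p => (kth K p : ℤ)) z := by
  set S : Set ℤ := {z | ∃ c : ℕ → ℕ → ℤ, IsKTab K c ∧ z = tabSum a K c}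
  have hbdd : BddBelow S := ⟨0, by
    rintro _ ⟨c, -, rfl⟩
    exact tabSum_eq_offDiagWeight a K c ▸ offDiagWeight_nonneg ha⟩
  have hne : S.Nonempty :=
    ⟨_, _, isKTab_iff_isTableau.2 (isTableau_of_strictMonoOn (strictMonoOn_coe_kth K)), rfl⟩
  constructor
  · obtain ⟨c, hc, hmin⟩ : sInf S ∈ S := Int.csInf_mem hne hbdd
    exact fun hz => ⟨c, hc, by rwa [← tabSum_eq_offDiagWeight, ← hmin]⟩
  · rintro ⟨c, hc, hz⟩
    rw [← tabSum_eq_offDiagWeight] at hz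
    exact (csInf_le hbdd ⟨c, hc, rfl⟩).trans hz

theorem IsRowTransfer.minTabSum_eq_min {a b : ℤ → ℤ → ℤ} {r g : ℕ → ℤ}
    (T : IsRowTransfer i a b r g) (ha : ∀ k l, 0 ≤ a k l) (hb : ∀ k l, 0 ≤ b k l)
    (hi : i ∉ K) (hi' : i + 1 ∈ K) :
    minTabSum a K =
      min (minTabSum b K + r 0) (minTabSum b (insert i (K.erase (i + 1))) + g 0) := by
  refine eq_of_forall_ge_iff fun z => ?_
  have hcompare := (T.offDiagComparison 0 K.card).of_notMem_of_succ_mem z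
    (natCast_mem_entries_kth.not.2 hi) (mod_cast natCast_mem_entries_kth.2 hi')
  rw [min_le_iff, ← le_sub_iff_add_le, ← le_sub_iff_add_le, minTabSum_le_iff ha,
    minTabSum_le_iff hb, minTabSum_le_iff hb, hcompare, offDiagLE_congr (eqOn_swap_kth hi hi'),
    card_insert_erase_succ hi hi']

end KTableaux

/-! ### The operators `ẽ_i^*` and their maximal power -/

/-- `R_l = max (A_l^{*(i)}(a), A_{l+1}^{*(i)}(a), …)`. The index `n + 1` accounts for all indices
beyond `n`, where `A_l^{*(i)}` vanishes. -/
def suffixMax (n : ℕ) (a : ℤ → ℤ → ℤ) (i l : ℕ) : ℤ :=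
  (insert (n + 1) (Finset.Icc l n)).sup' (Finset.insert_nonempty _ _) (Astar n a i)

/-- `Σ_{s=1}^{k−1} a_{s,k}`, the contribution of `k ∈ K` to `−M_K(a)`. -/
def columnSum (a : ℤ → ℤ → ℤ) (k : ℕ) : ℤ := ∑ s ∈ Finset.Icc 1 (k - 1), a s k

/-- The datum `ā = (ẽ_i^*)^{ε_i^*(a)} a`. -/
def etilStarMax (n : ℕ) (a : ℤ → ℤ → ℤ) (i : ℕ) : ℤ → ℤ → ℤ :=
  (fun b => etilStar n b i)^[(epsStar n a i).toNat] a

section Astar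

variable {n i : ℕ} {a : ℤ → ℤ → ℤ}

theorem Astar_eq_zero_of_lt {l : ℕ} (hl : n < l) : Astar n a i l = 0 := by
  rw [Astar, Finset.Icc_eq_empty (by lia), Finset.sum_empty]

theorem IsLusztig.Astar_eq_add (ha : IsLusztig n a) (i l : ℕ) :
    Astar n a i l = a i (l + 1) - a (i + 1) (l + 2) + Astar n a i (l + 1) := by
  by_cases hl : l ≤ n
  · rw [Astar, sum_Icc_eq_add_sum_Icc_add_one (Nat.add_le_add_right hl 1), Astar]
    push_cast
    ring_nf
  · rw [Astar_eq_zero_of_lt (by lia), Astar_eq_zero_of_lt (by lia), ha.2 _ _ (by lia),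
      ha.2 _ _ (by lia), sub_zero, add_zero]

theorem exists_le_Astar_eq_zero (l : ℕ) : ∃ l', l ≤ l' ∧ Astar n a i l' = 0 :=
  ⟨max l (n + 1), le_max_left _ _, Astar_eq_zero_of_lt (by lia)⟩

theorem suffixMax_le_iff {l : ℕ} {z : ℤ} :
    suffixMax n a i l ≤ z ↔ ∀ l', l ≤ l' → Astar n a i l' ≤ z := by
  simp only [suffixMax, Finset.sup'_le_iff, Finset.forall_mem_insert, Finset.mem_Icc]
  constructor
  · rintro ⟨hlast, hz⟩ l' hl'
    by_cases hn : l' ≤ n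
    · exact hz l' ⟨hl', hn⟩
    · rwa [Astar_eq_zero_of_lt (by lia), ← Astar_eq_zero_of_lt n.lt_succ_self]
  · intro hz
    refine ⟨?_, fun l' hl' => hz l' hl'.1⟩
    obtain ⟨l', hl', hzero⟩ := exists_le_Astar_eq_zero (n := n) (a := a) (i := i) l
    rw [Astar_eq_zero_of_lt n.lt_succ_self, ← hzero]
    exact hz l' hl'

theorem Astar_le_suffixMax {l l' : ℕ} (h : l ≤ l') : Astar n a i l' ≤ suffixMax n a i l :=
  suffixMax_le_iff.1 le_rfl l' h

theorem suffixMax_antitone : Antitone (suffixMax n a i) := fun _ _ h =>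
  suffixMax_le_iff.2 fun _ h' => Astar_le_suffixMax (h.trans h')

theorem suffixMax_nonneg (l : ℕ) : 0 ≤ suffixMax n a i l := by
  obtain ⟨l', hl', hzero⟩ := exists_le_Astar_eq_zero (n := n) (a := a) (i := i) l
  exact hzero ▸ Astar_le_suffixMax hl'

theorem suffixMax_eq_max (l : ℕ) :
    suffixMax n a i l = max (Astar n a i l) (suffixMax n a i (l + 1)) :=
  le_antisymm
    (suffixMax_le_iff.2 fun _ hl' => hl'.eq_or_lt.elim
      (fun h => h ▸ le_max_left _ _) fun h => (Astar_le_suffixMax h).trans (le_max_right _ _))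
    (max_le (Astar_le_suffixMax le_rfl) (suffixMax_antitone l.le_succ))

theorem exists_Astar_eq_epsStar (hi : i ≤ n) :
    ∃ l ∈ Finset.Icc i n, Astar n a i l = epsStar n a i := by
  have hne : ((Finset.Icc i n).image (Astar n a i)).Nonempty :=
    (Finset.nonempty_Icc.2 hi).image _
  obtain ⟨z, hz⟩ := Finset.max_of_nonempty hne
  rw [epsStar, hz, WithBot.unbotD_coe]
  exact Finset.mem_image.1 (Finset.mem_of_max hz)

theorem Astar_le_epsStar_of_mem {l : ℕ} (hl : l ∈ Finset.Icc i n) :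
    Astar n a i l ≤ epsStar n a i := by
  have hmem := Finset.mem_image_of_mem (Astar n a i) hl
  obtain ⟨z, hz⟩ := Finset.max_of_mem hmem
  rw [epsStar, hz, WithBot.unbotD_coe]
  exact Finset.le_max_of_eq hmem hz

theorem IsLusztig.epsStar_eq_suffixMax (ha : IsLusztig n a) (hi : i ≤ n) :
    epsStar n a i = suffixMax n a i i := by
  refine le_antisymm ?_ (suffixMax_le_iff.2 fun l hl => ?_)
  · obtain ⟨l, hl, h⟩ := exists_Astar_eq_epsStar (a := a) hi
    exact h ▸ Astar_le_suffixMax (Finset.mem_Icc.1 hl).1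
  by_cases hln : l ≤ n
  · exact Astar_le_epsStar_of_mem (Finset.mem_Icc.2 ⟨hl, hln⟩)
  have hlast : 0 ≤ Astar n a i n := by
    rw [ha.Astar_eq_add, Astar_eq_zero_of_lt n.lt_succ_self, ha.2 (i + 1) _ (by lia)]
    simpa using ha.1 i (n + 1)
  rw [Astar_eq_zero_of_lt (by lia)]
  exact hlast.trans (Astar_le_epsStar_of_mem (Finset.mem_Icc.2 ⟨hi, le_rfl⟩))

theorem leStar_mem_filter (hi : i ≤ n) :
    leStar n a i ∈ (Finset.Icc i n).filter fun l => Astar n a i l = epsStar n a i := by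
  have hne : ((Finset.Icc i n).filter fun l => Astar n a i l = epsStar n a i).Nonempty :=
    (exists_Astar_eq_epsStar hi).imp fun _ h => Finset.mem_filter.2 h
  obtain ⟨l, hl⟩ := Finset.max_of_nonempty hne
  rw [leStar, hl, WithBot.unbotD_coe]
  exact Finset.mem_of_max hl

theorem le_leStar (hi : i ≤ n) : i ≤ leStar n a i :=
  (Finset.mem_Icc.1 (Finset.mem_filter.1 (leStar_mem_filter hi)).1).1

theorem leStar_le (hi : i ≤ n) : leStar n a i ≤ n :=
  (Finset.mem_Icc.1 (Finset.mem_filter.1 (leStar_mem_filter hi)).1).2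

theorem Astar_leStar (hi : i ≤ n) : Astar n a i (leStar n a i) = epsStar n a i :=
  (Finset.mem_filter.1 (leStar_mem_filter hi)).2

theorem Astar_lt_epsStar {l : ℕ} (hi : i ≤ n) (heps : 0 < epsStar n a i)
    (hl : leStar n a i < l) : Astar n a i l < epsStar n a i := by
  by_cases hln : l ≤ n
  · have hmem : l ∈ Finset.Icc i n := Finset.mem_Icc.2 ⟨(le_leStar hi).trans hl.le, hln⟩
    refine (Astar_le_epsStar_of_mem hmem).lt_of_ne fun h => hl.not_ge ?_
    have hmem' : l ∈ (Finset.Icc i n).filter fun l => Astar n a i l = epsStar n a i :=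
      Finset.mem_filter.2 ⟨hmem, h⟩
    obtain ⟨z, hz⟩ := Finset.max_of_mem hmem'
    rw [leStar, hz, WithBot.unbotD_coe]
    exact Finset.le_max_of_eq hmem' hz
  · rwa [Astar_eq_zero_of_lt (by lia)]

end Astar

section EtilStar

variable {n i : ℕ} {a : ℤ → ℤ → ℤ}

theorem etilStar_apply (n : ℕ) (a : ℤ → ℤ → ℤ) (i : ℕ) (k l : ℤ) :
    etilStar n a i k l = a k l - (if k = i ∧ l = leStar n a i + 1 then 1 else 0) +
      (if k = i + 1 ∧ l = leStar n a i + 1 ∧ i < leStar n a i then 1 else 0) := by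
  unfold etilStar
  split_ifs <;> lia

theorem IsLusztig.apply_leStar_pos (ha : IsLusztig n a) (hi : i ≤ n)
    (heps : 0 < epsStar n a i) : 0 < a i (leStar n a i + 1) := by
  have hlt : Astar n a i (leStar n a i + 1) < Astar n a i (leStar n a i) :=
    Astar_leStar hi ▸ Astar_lt_epsStar hi heps (Nat.lt_succ_self _)
  rw [ha.Astar_eq_add i (leStar n a i)] at hlt
  linarith [ha.1 (i + 1) (leStar n a i + 2)]

theorem isLusztig_etilStar (ha : IsLusztig n a) (hi : i ≤ n) (heps : 0 < epsStar n a i) :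
    IsLusztig n (etilStar n a i) := by
  have hpos := ha.apply_leStar_pos hi heps
  have hrange : 1 ≤ (i : ℤ) := by
    by_contra h
    exact hpos.ne' (ha.2 _ _ (by lia))
  have hle := leStar_le (a := a) hi
  have hile := le_leStar (a := a) hi
  refine ⟨fun k l => ?_, fun k l hkl => ?_⟩
  · have hnonneg := ha.1 k l
    rw [etilStar_apply]
    by_cases h : k = i ∧ l = leStar n a i + 1
    · rw [h.1, h.2] at hnonneg ⊢
      split_ifs <;> lia
    · rw [if_neg h, sub_zero]
      split_ifs <;> lia
  · rw [etilStar_apply, ha.2 k l hkl, if_neg (by lia), if_neg (by lia)]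
    rfl

theorem Astar_etilStar {l : ℕ} (hi : i ≤ n) (hl : i ≤ l) :
    Astar n (etilStar n a i) i l =
      Astar n a i l - (if l ≤ leStar n a i then 1 else 0) -
        (if l < leStar n a i then 1 else 0) := by
  have hle := leStar_le (a := a) hi
  have hentry : ∀ t ∈ Finset.Icc (l + 1) (n + 1),
      etilStar n a i i t - etilStar n a i (i + 1) (t + 1) = (a i t - a (i + 1) (t + 1)) -
        (if t = leStar n a i + 1 then 1 else 0) - (if t = leStar n a i then 1 else 0) := by
    intro t ht
    rw [Finset.mem_Icc] at ht
    rw [etilStar_apply, etilStar_apply]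
    split_ifs <;> lia
  rw [Astar, Finset.sum_congr rfl hentry, Finset.sum_sub_distrib, Finset.sum_sub_distrib,
    Finset.sum_ite_eq', Finset.sum_ite_eq', Astar]
  simp only [Finset.mem_Icc]
  split_ifs <;> lia

theorem IsLusztig.suffixMax_etilStar {l : ℕ} (ha : IsLusztig n a) (hi : i ≤ n)
    (heps : 0 < epsStar n a i) (hl : i ≤ l) :
    suffixMax n (etilStar n a i) i l =
      suffixMax n a i l - (if l ≤ leStar n a i then 1 else 0) := by
  split_ifs with hle
  · have hmax : suffixMax n a i l = epsStar n a i :=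
      le_antisymm (ha.epsStar_eq_suffixMax hi ▸ suffixMax_antitone hl)
        (Astar_leStar hi ▸ Astar_le_suffixMax hle)
    refine le_antisymm (suffixMax_le_iff.2 fun l' hl' => ?_) ?_
    · have hle' := Astar_le_suffixMax (n := n) (a := a) (i := i) hl'
      have hlt := Astar_lt_epsStar (a := a) (l := l') hi heps
      rw [Astar_etilStar hi (hl.trans hl')]
      split_ifs <;> lia
    · have hattained := Astar_etilStar (a := a) hi (le_leStar (a := a) hi)
      rw [if_pos le_rfl, if_neg (lt_irrefl _), Astar_leStar hi, sub_zero] at hattained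
      exact hmax ▸ hattained ▸ Astar_le_suffixMax hle
  · refine eq_of_forall_ge_iff fun z => ?_
    rw [sub_zero, suffixMax_le_iff, suffixMax_le_iff]
    refine forall₂_congr fun l' hl' => ?_
    rw [Astar_etilStar hi (hl.trans hl'), if_neg (by lia), if_neg (by lia), sub_zero, sub_zero]

theorem IsLusztig.epsStar_etilStar (ha : IsLusztig n a) (hi : i ≤ n)
    (heps : 0 < epsStar n a i) :
    epsStar n (etilStar n a i) i = epsStar n a i - 1 := by
  rw [(isLusztig_etilStar ha hi heps).epsStar_eq_suffixMax hi, ha.suffixMax_etilStar hi heps le_rfl,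
    if_pos (le_leStar hi), ha.epsStar_eq_suffixMax hi]

theorem columnSum_etilStar (k : ℕ) (hi : i ≤ n) (hi1 : 1 ≤ i) :
    columnSum (etilStar n a i) k =
      columnSum a k - (if k = i + 1 ∧ leStar n a i = i then 1 else 0) := by
  have hle := le_leStar (a := a) hi
  have hentry (s : ℕ) : etilStar n a i s k = a s k -
      (if s = i then if k = leStar n a i + 1 then 1 else 0 else 0) +
      (if s = i + 1 then if k = leStar n a i + 1 ∧ i < leStar n a i then 1 else 0 else 0) := by
    rw [etilStar_apply]
    split_ifs <;> lia
  rw [columnSum, Finset.sum_congr rfl fun s _ => hentry s, Finset.sum_add_distrib,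
    Finset.sum_sub_distrib, Finset.sum_ite_eq', Finset.sum_ite_eq', columnSum]
  simp only [Finset.mem_Icc]
  split_ifs <;> lia

end EtilStar

section EtilStarMax

variable {n i : ℕ} {a : ℤ → ℤ → ℤ}

theorem IsLusztig.etilStarMax_induction {P : (ℤ → ℤ → ℤ) → Prop} (ha : IsLusztig n a)
    (hi : i ≤ n) (hP : P a)
    (hstep : ∀ b, IsLusztig n b → 0 < epsStar n b i → P b → P (etilStar n b i)) :
    IsLusztig n (etilStarMax n a i) ∧ epsStar n (etilStarMax n a i) i = 0 ∧
      P (etilStarMax n a i) := by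
  obtain ⟨N, hN⟩ : ∃ N : ℕ, epsStar n a i = N :=
    Int.eq_ofNat_of_zero_le (ha.epsStar_eq_suffixMax hi ▸ suffixMax_nonneg i)
  rw [etilStarMax, hN, Int.toNat_natCast]
  induction N generalizing a with
  | zero => exact ⟨ha, hN, hP⟩
  | succ N ih =>
    have heps : 0 < epsStar n a i := by lia
    exact ih (isLusztig_etilStar ha hi heps) (hstep a ha heps hP)
      (by rw [ha.epsStar_etilStar hi heps]; lia)

theorem isLusztig_etilStarMax (ha : IsLusztig n a) (hi : i ≤ n) :
    IsLusztig n (etilStarMax n a i) :=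
  (ha.etilStarMax_induction (P := fun _ => True) hi trivial fun _ _ _ _ => trivial).1

theorem IsLusztig.suffixMax_etilStarMax {l : ℕ} (ha : IsLusztig n a) (hi : i ≤ n) (hl : i ≤ l) :
    suffixMax n (etilStarMax n a i) i l = 0 := by
  have heps := (ha.etilStarMax_induction (P := fun _ => True) hi trivial fun _ _ _ _ => trivial).2.1
  rw [(isLusztig_etilStarMax ha hi).epsStar_eq_suffixMax hi] at heps
  exact le_antisymm (heps ▸ suffixMax_antitone hl) (suffixMax_nonneg l)

theorem IsLusztig.apply_etilStarMax {β : Type*} (F : (ℤ → ℤ → ℤ) → β) (ha : IsLusztig n a)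
    (hi : i ≤ n)
    (hF : ∀ b, IsLusztig n b → 0 < epsStar n b i → F (etilStar n b i) = F b) :
    F (etilStarMax n a i) = F a :=
  (ha.etilStarMax_induction (P := fun b => F b = F a) hi rfl fun b hb heps h =>
    (hF b hb heps).trans h).2.2

theorem IsLusztig.etilStarMax_row {l : ℕ} (ha : IsLusztig n a) (hi : i ≤ n) (hl : i ≤ l) :
    etilStarMax n a i i (l + 1) =
      a i (l + 1) - (suffixMax n a i l - suffixMax n a i (l + 1)) := by
  have hinv := ha.apply_etilStarMax
    (fun b => b i (l + 1) - (suffixMax n b i l - suffixMax n b i (l + 1))) hi fun b hb heps => by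
      rw [hb.suffixMax_etilStar hi heps hl, hb.suffixMax_etilStar hi heps (hl.trans l.le_succ),
        etilStar_apply]
      split_ifs <;> lia
  rwa [ha.suffixMax_etilStarMax hi hl, ha.suffixMax_etilStarMax hi (hl.trans l.le_succ), sub_zero,
    sub_zero] at hinv

theorem IsLusztig.etilStarMax_row_succ {l : ℕ} (ha : IsLusztig n a) (hi : i ≤ n) (hl : i < l) :
    etilStarMax n a i (i + 1) (l + 1) =
      a (i + 1) (l + 1) + (suffixMax n a i l - suffixMax n a i (l + 1)) := by
  have hinv := ha.apply_etilStarMax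
    (fun b => b (i + 1) (l + 1) + (suffixMax n b i l - suffixMax n b i (l + 1))) hi
    fun b hb heps => by
      rw [hb.suffixMax_etilStar hi heps hl.le,
        hb.suffixMax_etilStar hi heps (hl.le.trans l.le_succ), etilStar_apply]
      split_ifs <;> lia
  rwa [ha.suffixMax_etilStarMax hi hl.le, ha.suffixMax_etilStarMax hi (hl.le.trans l.le_succ),
    sub_zero, add_zero] at hinv

theorem IsLusztig.etilStarMax_row_of_ne {k : ℤ} (l : ℤ) (ha : IsLusztig n a) (hi : i ≤ n)
    (hk : k ≠ i) (hk' : k ≠ i + 1) : etilStarMax n a i k l = a k l :=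
  ha.apply_etilStarMax (fun b => b k l) hi fun b _ _ => by
    rw [etilStar_apply, if_neg fun h => hk h.1, if_neg fun h => hk' h.1, sub_zero, add_zero]

theorem IsLusztig.Astar_etilStarMax (ha : IsLusztig n a) (hi : i ≤ n) :
    Astar n (etilStarMax n a i) i i =
      Astar n a i i - suffixMax n a i i - suffixMax n a i (i + 1) := by
  have hinv := ha.apply_etilStarMax
    (fun b => Astar n b i i - suffixMax n b i i - suffixMax n b i (i + 1)) hi fun b hb heps => by
      rw [hb.suffixMax_etilStar hi heps le_rfl, hb.suffixMax_etilStar hi heps i.le_succ,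
        Astar_etilStar hi le_rfl]
      split_ifs <;> lia
  rwa [ha.suffixMax_etilStarMax hi le_rfl, ha.suffixMax_etilStarMax hi i.le_succ, sub_zero,
    sub_zero] at hinv

theorem IsLusztig.columnSum_etilStarMax (k : ℕ) (ha : IsLusztig n a) (hi : i ≤ n) (hi1 : 1 ≤ i) :
    columnSum (etilStarMax n a i) k =
      columnSum a k - (if k = i + 1 then suffixMax n a i i - suffixMax n a i (i + 1) else 0) := by
  have hinv := ha.apply_etilStarMax
    (fun b => columnSum b k -
      (if k = i + 1 then suffixMax n b i i - suffixMax n b i (i + 1) else 0)) hi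
    fun b hb heps => by
      have hle := le_leStar (a := b) hi
      rw [hb.suffixMax_etilStar hi heps le_rfl, hb.suffixMax_etilStar hi heps i.le_succ,
        columnSum_etilStar k hi hi1]
      split_ifs <;> lia
  rwa [ha.suffixMax_etilStarMax hi le_rfl, ha.suffixMax_etilStarMax hi i.le_succ, sub_zero,
    ite_self, sub_zero] at hinv

theorem IsLusztig.isRowTransfer_etilStarMax (ha : IsLusztig n a) (hi : i ≤ n) :
    IsRowTransfer i a (etilStarMax n a i)
      (fun d => suffixMax n a i (i + d) - suffixMax n a i (i + d + 1))
      (fun d => suffixMax n a i (i + d) - Astar n a i (i + d)) where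
  row d := by
    have h := ha.etilStarMax_row hi (Nat.le_add_right i d)
    push_cast at h ⊢
    rwa [add_assoc] at h
  row_succ d := by
    have h := ha.etilStarMax_row_succ hi (by lia : i < i + (d + 1))
    push_cast at h ⊢
    rwa [add_right_comm] at h
  row_of_ne l := ha.etilStarMax_row_of_ne l hi
  potential_add d := by
    have hrow := ha.etilStarMax_row hi (Nat.le_add_right i d)
    have hA := ha.Astar_eq_add i (i + d)
    push_cast at hrow hA ⊢
    ring_nf at hrow hA ⊢
    linarith
  min_eq_zero d := by
    have := suffixMax_eq_max (n := n) (a := a) (i := i) (i + d)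
    lia

end EtilStarMax

/-! ### The weight and `M_K` -/

section Weight

variable {n i : ℕ} {a : ℤ → ℤ → ℤ}

theorem mwt_add_one_add_columnSum {j : ℕ} (a : ℤ → ℤ → ℤ) (hj : j ≤ n) :
    mwt n a (j + 1) + columnSum a (j + 1) =
      mwt n a j + ∑ l ∈ Finset.Icc (j + 2) (n + 1), a (j + 1) l := by
  have hsplit (k : ℕ) : ∑ l ∈ Finset.Icc (j + 1) (n + 1), a k l =
      a k (j + 1 : ℕ) + ∑ l ∈ Finset.Icc (j + 2) (n + 1), a k l :=
    sum_Icc_eq_add_sum_Icc_add_one (Nat.add_le_add_right hj 1) _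
  rw [mwt, mwt, columnSum, Finset.sum_Icc_succ_top j.succ_pos, Finset.sum_congr rfl
    fun k _ => hsplit k, Finset.sum_add_distrib, Nat.add_sub_cancel, Nat.cast_succ]
  ring

theorem IsLusztig.Astar_self_eq_sub (ha : IsLusztig n a) (hi : i ≤ n) :
    Astar n a i i = ∑ l ∈ Finset.Icc (i + 1) (n + 1), a i l -
      ∑ l ∈ Finset.Icc (i + 2) (n + 1), a (i + 1) l := by
  have hshift := sum_Icc_add_one_add_one (i + 1) (n + 1) fun l => a (i + 1) l
  rw [Finset.sum_Icc_succ_top (by lia), ha.2 _ ((n + 1 + 1 : ℕ) : ℤ) (by lia), add_zero] at hshift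
  simp only [Nat.cast_succ] at hshift
  rw [Astar, Finset.sum_sub_distrib, hshift]

theorem IsLusztig.weight_eq (ha : IsLusztig n a) (hi : i ≤ n) (hi1 : 1 ≤ i) :
    -2 * mwt n a i + mwt n a (i - 1) + mwt n a (i + 1) =
      columnSum a i - columnSum a (i + 1) - Astar n a i i := by
  obtain ⟨j, rfl⟩ := Nat.exists_eq_add_of_le' hi1
  have hlower := mwt_add_one_add_columnSum a (Nat.le_of_succ_le hi)
  have hupper := mwt_add_one_add_columnSum a hi
  have hA := ha.Astar_self_eq_sub hi
  rw [Nat.add_sub_cancel]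
  push_cast at *
  linarith

theorem MK_eq {K : Finset ℕ} (a : ℤ → ℤ → ℤ) (hne : K ≠ ∅) (hfull : K ≠ Finset.Icc 1 (n + 1)) :
    MK n a K = -∑ k ∈ K, columnSum a k + minTabSum a K :=
  if_neg (not_or.2 ⟨hne, hfull⟩)

variable {K : Finset ℕ}

theorem sum_insert_erase_succ (f : ℕ → ℤ) (hi : i ∉ K) (hi' : i + 1 ∈ K) :
    ∑ k ∈ insert i (K.erase (i + 1)), f k = ∑ k ∈ K, f k + f i - f (i + 1) := by
  rw [Finset.sum_insert fun h => hi (Finset.mem_of_mem_erase h), Finset.sum_erase_eq_sub hi']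
  ring

theorem IsLusztig.sum_columnSum_etilStarMax (ha : IsLusztig n a) (hi : i ≤ n) (hi1 : 1 ≤ i)
    (hi' : i + 1 ∈ K) :
    ∑ k ∈ K, columnSum (etilStarMax n a i) k =
      ∑ k ∈ K, columnSum a k - (suffixMax n a i i - suffixMax n a i (i + 1)) := by
  simp only [ha.columnSum_etilStarMax _ hi hi1, Finset.sum_sub_distrib, Finset.sum_ite_eq', hi',
    if_true]

theorem IsLusztig.MK_insert_erase_succ_add_weight (ha : IsLusztig n a) (hi : i ≤ n) (hi1 : 1 ≤ i)
    (hiK : i ∉ K) (hiK' : i + 1 ∈ K) :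
    MK n a (insert i (K.erase (i + 1))) +
        (-2 * mwt n a i + mwt n a (i - 1) + mwt n a (i + 1)) =
      -∑ k ∈ K, columnSum a k + minTabSum a (insert i (K.erase (i + 1))) - Astar n a i i := by
  have hfull : insert i (K.erase (i + 1)) ≠ Finset.Icc 1 (n + 1) := fun h => by
    have : i + 1 ∈ insert i (K.erase (i + 1)) := h ▸ Finset.mem_Icc.2 ⟨i.succ_pos, by lia⟩
    simp at this
  rw [MK_eq a (Finset.insert_ne_empty _ _) hfull, ha.weight_eq hi hi1,
    sum_insert_erase_succ _ hiK hiK']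
  ring

end Weight

/-- for every Lusztig datum `a`, every `1 ≤ i ≤ n`, and every `K ∈ M_n^×`
with `i ∉ K` and `i+1 ∈ K`, one has
`M_K(a) = min{ M_K(ā), M_{s_iK}(ā) + ⟨h_i, wt(ā)⟩ − ε_i^*(a) }`, where
`ā = (ẽ_i^*)^{ε_i^*(a)} a`, `s_iK = (K ∖ {i+1}) ∪ {i}`, and
`⟨h_i, wt(ā)⟩ = −2 m_i(ā) + m_{i−1}(ā) + m_{i+1}(ā)`. -/
theorem stmt17 (n : ℕ) (hn : 1 ≤ n) (a : ℤ → ℤ → ℤ) (ha : IsLusztig n a)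
    (i : ℕ) (hi1 : 1 ≤ i) (hi2 : i ≤ n)
    (K : Finset ℕ) (hK : K ⊆ Finset.Icc 1 (n + 1)) (hKne : K ≠ ∅)
    (hKfull : K ≠ Finset.Icc 1 (n + 1)) (hiK : i ∉ K) (hi1K : i + 1 ∈ K) :
    let abar : ℤ → ℤ → ℤ := (fun b => etilStar n b i)^[(epsStar n a i).toNat] a
    MK n a K =
      min (MK n abar K)
        (MK n abar (insert i (K.erase (i + 1))) +
          (-2 * mwt n abar i + mwt n abar (i - 1) + mwt n abar (i + 1)) -
          epsStar n a i) := by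
  intro abar
  have hbar : IsLusztig n abar := isLusztig_etilStarMax ha hi2
  have htab : minTabSum a K = min
      (minTabSum abar K + (suffixMax n a i i - suffixMax n a i (i + 1)))
      (minTabSum abar (insert i (K.erase (i + 1))) + (suffixMax n a i i - Astar n a i i)) :=
    (ha.isRowTransfer_etilStarMax hi2).minTabSum_eq_min ha.1 hbar.1 hiK hi1K
  have hcol : ∑ k ∈ K, columnSum abar k =
      ∑ k ∈ K, columnSum a k - (suffixMax n a i i - suffixMax n a i (i + 1)) :=
    ha.sum_columnSum_etilStarMax hi2 hi1 hi1K
  have hA : Astar n abar i i = Astar n a i i - suffixMax n a i i - suffixMax n a i (i + 1) :=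
    ha.Astar_etilStarMax hi2
  rw [MK_eq a hKne hKfull, MK_eq abar hKne hKfull,
    hbar.MK_insert_erase_succ_add_weight hi2 hi1 hiK hi1K, ha.epsStar_eq_suffixMax hi2, htab,
    hcol, hA, ← min_add_add_left]
  congr 1 <;> ring
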